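/- Let {ψ_i}_{i=1}^n be an orthonormal basis of ℝ^n with overlap at most K, let 1 ≤ p < ∞ with Hölder conjugate p', and suppose ‖ψ_k‖_p · ‖ψ_k‖_{p'} ≤ M for every k. Let f ∈ ℝ^n, B ≤ n, and let S ⊆ {1,…,n} with |S| = B consist of indices of the B largest values of |⟨f, ψ_k⟩| / ‖ψ_k‖_{p'}. Then ‖f − Σ_{i∈S} ⟨f, ψ_i⟩ ψ_i‖_p ≤ M · K · E, where E = min over B-sparse z of ‖f − Σ_i z_i ψ_i‖_p. -/

import Mathlib

open scoped ENNReal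

/-- Standard inner product on `ℝ^n`. -/
noncomputable def dotp {n : ℕ} (x y : Fin n → ℝ) : ℝ := ∑ j, x j * y j

/-- The `ℓ_p` norm on `ℝ^n`, for `p ∈ [1, ∞]` (extended-real exponent). -/
noncomputable def lpNorm {n : ℕ} (p : ℝ≥0∞) (x : Fin n → ℝ) : ℝ :=
  if p = ∞ then ⨆ j, |x j| else (∑ j, |x j| ^ p.toReal) ^ (1 / p.toReal)

/-- A vector is `B`-sparse if it has at most `B` nonzero components. -/
def Sparse {n : ℕ} (B : ℕ) (z : Fin n → ℝ) : Prop :=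
  ({i | z i ≠ 0} : Set (Fin n)).ncard ≤ B

/-! Put `w k = |⟨f, φ k⟩| / ‖φ k‖_q`, where `φ` is the dual system of `ψ` (so `φ = ψ` for an
orthonormal basis). Hölder's inequality on the at most `K` vectors `ψ i` that are nonzero at a given
coordinate bounds the residual `f - ∑ i ∈ S, ⟨f, φ i⟩ ψ i` by `M K^(1/q)` times the `ℓ_p` norm of
`w` off `S`. As `S` carries the largest values of `w`, this norm is at most that of `w` off the
support of any `B`-sparse `z`. There `⟨f, φ k⟩ = ⟨e, φ k⟩` with `e = f - ∑ i, z i ψ i`, and Hölder's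
inequality on the support of `φ k` bounds `w k` by the `ℓ_p` norm of `e` on that support; if `φ` has
overlap at most `L`, each coordinate of `e` is counted at most `L` times, which costs `L^(1/p)`. For
`φ = ψ` the two overlap factors multiply to `K^(1/q) K^(1/p) = K`. -/

section PiLp

open WithLp

variable {ι κ E F : Type*} [Fintype ι] [Fintype κ]
  [SeminormedAddCommGroup E] [SeminormedAddCommGroup F] {p q : ℝ≥0∞}

theorem norm_toLp_le_norm_toLp [Fact (1 ≤ p)] {x : ι → E} {y : ι → F}
    (h : ∀ i, ‖x i‖ ≤ ‖y i‖) : ‖toLp p x‖ ≤ ‖toLp p y‖ := by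
  rcases p.dichotomy with rfl | hp
  · simp only [PiLp.norm_eq_ciSup]
    exact ciSup_mono (Set.finite_range _).bddAbove h
  · simp only [PiLp.norm_eq_sum (zero_lt_one.trans_le hp)]
    gcongr with i
    exact h i

theorem norm_toLp_le_mul_norm_toLp [Fact (1 ≤ p)] {x : ι → E} {y : ι → F} {C : ℝ} (hC : 0 ≤ C)
    (h : ∀ i, ‖x i‖ ≤ C * ‖y i‖) : ‖toLp p x‖ ≤ C * ‖toLp p y‖ := by
  calc ‖toLp p x‖ ≤ ‖toLp p (C • fun i ↦ ‖y i‖)‖ :=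
        norm_toLp_le_norm_toLp fun i ↦ (h i).trans (le_abs_self _)
    _ = C * ‖toLp p fun i ↦ ‖y i‖‖ := by
        rw [toLp_smul, norm_smul, Real.norm_of_nonneg hC]
    _ ≤ C * ‖toLp p y‖ := by
        gcongr
        exact norm_toLp_le_norm_toLp fun i ↦ (norm_norm (y i)).le

theorem norm_toLp_rpow (hp : 0 < p.toReal) (x : ι → E) :
    ‖toLp p x‖ ^ p.toReal = ∑ i, ‖x i‖ ^ p.toReal := by
  rw [PiLp.norm_eq_sum hp, one_div, Real.rpow_inv_rpow (by positivity) hp.ne']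

theorem norm_toLp_norm_toLp_comm [Fact (1 ≤ p)] (x : ι → κ → E) :
    ‖toLp p fun i ↦ ‖toLp p (x i)‖‖ = ‖toLp p fun k ↦ ‖toLp p fun i ↦ x i k‖‖ := by
  rcases p.dichotomy with rfl | hp
  · simp_rw [PiLp.norm_toLp, ← coe_nnnorm, Pi.nnnorm_def, NNReal.nnnorm_eq]
    rw [Finset.sup_comm]
  · have hp0 : 0 < p.toReal := zero_lt_one.trans_le hp
    simp only [PiLp.norm_eq_sum hp0 (toLp p fun _ ↦ ‖_‖), norm_norm, norm_toLp_rpow hp0]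
    rw [Finset.sum_comm]

theorem sum_norm_mul_norm_le_norm_toLp_top_mul_norm_toLp_one (x : ι → E) (y : ι → F) :
    ∑ i, ‖x i‖ * ‖y i‖ ≤ ‖toLp ∞ x‖ * ‖toLp 1 y‖ := by
  rw [PiLp.norm_eq_of_L1, Finset.mul_sum]
  gcongr with i
  exact PiLp.norm_apply_le (toLp ∞ x) i

theorem sum_norm_mul_norm_le_norm_toLp_mul_norm_toLp [p.HolderConjugate q] (x : ι → E) (y : ι → F) :
    ∑ i, ‖x i‖ * ‖y i‖ ≤ ‖toLp p x‖ * ‖toLp q y‖ := by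
  rcases eq_or_ne p ∞ with rfl | hp
  · obtain rfl : q = 1 := (ENNReal.HolderConjugate.eq_top_iff_eq_one ∞ q).1 rfl
    exact sum_norm_mul_norm_le_norm_toLp_top_mul_norm_toLp_one x y
  rcases eq_or_ne q ∞ with rfl | hq
  · obtain rfl : p = 1 := (ENNReal.HolderConjugate.eq_top_iff_eq_one ∞ p).1 rfl
    simpa only [mul_comm] using sum_norm_mul_norm_le_norm_toLp_top_mul_norm_toLp_one y x
  have hpq := ENNReal.HolderConjugate.toReal_of_ne_top hp hq
  simpa only [abs_norm, PiLp.norm_eq_sum hpq.pos, PiLp.norm_eq_sum hpq.symm.pos] using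
    Real.inner_le_Lp_mul_Lq Finset.univ (‖x ·‖) (‖y ·‖) hpq

theorem norm_toLp_indicator_const_le [Fact (1 ≤ p)] (s : Set ι) (c : E) :
    ‖toLp p (s.indicator fun _ ↦ c)‖ ≤ (s.ncard : ℝ) ^ p.toReal⁻¹ * ‖c‖ := by
  classical
  rcases p.dichotomy with rfl | hp
  · rw [PiLp.norm_eq_ciSup]
    simpa using Real.iSup_le (fun i ↦ norm_indicator_le_norm_self (fun _ ↦ c) i) (norm_nonneg c)
  · have hp0 : 0 < p.toReal := zero_lt_one.trans_le hp
    have hsum : ∑ i, ‖s.indicator (fun _ ↦ c) i‖ ^ p.toReal = s.ncard * ‖c‖ ^ p.toReal := by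
      simp [Set.indicator_apply, apply_ite, hp0.ne', Finset.sum_ite, Set.ncard_eq_toFinset_card']
    rw [PiLp.norm_eq_sum hp0, hsum, one_div, Real.mul_rpow (by positivity) (by positivity),
      Real.rpow_rpow_inv (norm_nonneg c) hp0.ne']

theorem norm_toLp_sum_le_of_overlap_le (p q : ℝ≥0∞) [p.HolderConjugate q] {K : ℕ}
    {g : ι → κ → E} (hK : ∀ j, {i | g i j ≠ 0}.ncard ≤ K) :
    ‖toLp p (∑ i, g i)‖ ≤ (K : ℝ) ^ q.toReal⁻¹ * ‖toLp p fun i ↦ ‖toLp p (g i)‖‖ := by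
  have : Fact (1 ≤ p) := ⟨ENNReal.HolderConjugate.one_le p q⟩
  have : Fact (1 ≤ q) := ⟨ENNReal.HolderConjugate.one_le q p⟩
  have hcol (j : κ) : ‖∑ i, g i j‖ ≤ (K : ℝ) ^ q.toReal⁻¹ * ‖toLp p fun i ↦ g i j‖ := by
    set s : Set ι := {i | g i j ≠ 0}
    have hs : ‖toLp q (s.indicator fun _ ↦ (1 : ℝ))‖ ≤ (K : ℝ) ^ q.toReal⁻¹ := by
      refine (norm_toLp_indicator_const_le s 1).trans ?_
      rw [norm_one, mul_one]
      gcongr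
      exact hK j
    calc ‖∑ i, g i j‖ ≤ ∑ i, ‖g i j‖ := norm_sum_le _ _
      _ = ∑ i, ‖g i j‖ * ‖s.indicator (fun _ ↦ (1 : ℝ)) i‖ := by
        congr! with i
        by_cases h : g i j = 0 <;> simp [s, h]
      _ ≤ ‖toLp p fun i ↦ g i j‖ * ‖toLp q (s.indicator fun _ ↦ (1 : ℝ))‖ :=
        sum_norm_mul_norm_le_norm_toLp_mul_norm_toLp _ _
      _ ≤ (K : ℝ) ^ q.toReal⁻¹ * ‖toLp p fun i ↦ g i j‖ := by
        rw [mul_comm]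
        gcongr
  rw [norm_toLp_norm_toLp_comm]
  exact norm_toLp_le_mul_norm_toLp (by positivity) fun j ↦ by
    simpa only [Finset.sum_apply, norm_norm] using hcol j

theorem abs_dotProduct_le_norm_indicator_support_mul_norm [p.HolderConjugate q] (x y : ι → ℝ) :
    |x ⬝ᵥ y| ≤ ‖toLp p (y.support.indicator x)‖ * ‖toLp q y‖ := by
  have hsupp (i : ι) : y.support.indicator x i * y i = x i * y i := by
    by_cases h : y i = 0 <;> simp [h]
  calc |x ⬝ᵥ y| = ‖∑ i, y.support.indicator x i * y i‖ := by
        simp only [hsupp, dotProduct, Real.norm_eq_abs]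
    _ ≤ ∑ i, ‖y.support.indicator x i‖ * ‖y i‖ := by
        simpa only [norm_mul] using norm_sum_le Finset.univ fun i ↦ y.support.indicator x i * y i
    _ ≤ ‖toLp p (y.support.indicator x)‖ * ‖toLp q y‖ :=
        sum_norm_mul_norm_le_norm_toLp_mul_norm_toLp _ _

theorem norm_toLp_norm_indicator_support_le_of_overlap_le [Fact (1 ≤ p)] {R : Type*} [Zero R]
    {y : ι → κ → R} {L : ℕ}
    (hL : ∀ j, {i | y i j ≠ 0}.ncard ≤ L) (x : κ → E) :
    ‖toLp p fun i ↦ ‖toLp p ((y i).support.indicator x)‖‖ ≤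
      (L : ℝ) ^ p.toReal⁻¹ * ‖toLp p x‖ := by
  rw [norm_toLp_norm_toLp_comm]
  refine norm_toLp_le_mul_norm_toLp (by positivity) fun j ↦ ?_
  rw [norm_norm]
  refine (norm_toLp_indicator_const_le {i | y i j ≠ 0} (x j)).trans ?_
  gcongr
  exact hL j

end PiLp

section Greedy

variable {ι : Type*} {S T : Finset ι}

theorem sum_le_sum_of_forall_le_of_card_le {R : Type*} [AddCommMonoid R] [LinearOrder R]
    [IsOrderedAddMonoid R] {w : ι → R} (hw : ∀ k ∈ T, 0 ≤ w k)
    (h : ∀ i ∈ S, ∀ k ∈ T, w i ≤ w k) (hcard : S.card ≤ T.card) :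
    ∑ i ∈ S, w i ≤ ∑ k ∈ T, w k := by
  rcases T.eq_empty_or_nonempty with rfl | hT
  · simp_all
  · obtain ⟨m, hm, hmin⟩ := T.exists_min_image w hT
    calc ∑ i ∈ S, w i ≤ S.card • w m := Finset.sum_le_card_nsmul _ _ _ fun i hi ↦ h i hi m hm
      _ ≤ T.card • w m := nsmul_le_nsmul_left (hw m hm) hcard
      _ ≤ ∑ k ∈ T, w k := Finset.card_nsmul_le_sum _ _ _ hmin

theorem sum_compl_le_sum_compl_of_card_le [Fintype ι] [DecidableEq ι] {R : Type*}
    [AddCommMonoid R] [LinearOrder R] [IsOrderedAddMonoid R] {w : ι → R} (hw : ∀ i ∈ S, 0 ≤ w i)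
    (hS : ∀ i ∈ S, ∀ k ∉ S, w k ≤ w i) (hcard : T.card ≤ S.card) :
    ∑ k ∈ Sᶜ, w k ≤ ∑ k ∈ Tᶜ, w k := by
  have hdiff : ∑ k ∈ T \ S, w k ≤ ∑ k ∈ S \ T, w k :=
    sum_le_sum_of_forall_le_of_card_le (fun k hk ↦ hw k (Finset.mem_sdiff.1 hk).1)
      (fun i hi k hk ↦ hS k (Finset.mem_sdiff.1 hk).1 i (Finset.mem_sdiff.1 hi).2)
      (Finset.card_sdiff_le_card_sdiff_iff.2 hcard)
  have hcomm : Sᶜ \ T = Tᶜ \ S := by ext; simp [and_comm]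
  rw [← Finset.sum_inter_add_sum_sdiff Sᶜ T, ← Finset.sum_inter_add_sum_sdiff Tᶜ S,
    Finset.inter_comm Sᶜ, ← Finset.sdiff_eq_inter_compl, Finset.inter_comm Tᶜ,
    ← Finset.sdiff_eq_inter_compl, hcomm]
  gcongr

open WithLp in
theorem norm_toLp_indicator_compl_le_of_card_le [Fintype ι] {E : Type*} [SeminormedAddCommGroup E]
    {p : ℝ≥0∞} [Fact (1 ≤ p)] {w : ι → E} (hS : ∀ i ∈ S, ∀ k ∉ S, ‖w k‖ ≤ ‖w i‖)
    (hcard : T.card ≤ S.card) :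
    ‖toLp p ((S : Set ι)ᶜ.indicator w)‖ ≤ ‖toLp p ((T : Set ι)ᶜ.indicator w)‖ := by
  classical
  rcases p.dichotomy with rfl | hp
  · have hle {k : ι} (hk : k ∉ T) : ‖w k‖ ≤ ‖toLp ∞ ((T : Set ι)ᶜ.indicator w)‖ := by
      simpa [hk] using PiLp.norm_apply_le (toLp ∞ ((T : Set ι)ᶜ.indicator w)) k
    rw [PiLp.norm_eq_ciSup]
    refine Real.iSup_le (fun k ↦ ?_) (norm_nonneg _)
    by_cases hkS : k ∈ S
    · simp [hkS]
    rw [PiLp.toLp_apply, Set.indicator_of_mem (by simpa using hkS)]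
    by_cases hkT : k ∈ T
    · obtain ⟨i, hiS, hiT⟩ : ∃ i ∈ S, i ∉ T := by
        by_contra! hST
        exact hkS (Finset.eq_of_subset_of_card_le hST hcard ▸ hkT)
      exact (hS i hiS k hkS).trans (hle hiT)
    · exact hle hkT
  · have hp0 : 0 < p.toReal := zero_lt_one.trans_le hp
    have hsum (A : Finset ι) :
        ∑ k, ‖(A : Set ι)ᶜ.indicator w k‖ ^ p.toReal = ∑ k ∈ Aᶜ, ‖w k‖ ^ p.toReal := by
      simp [Set.indicator_apply, apply_ite, hp0.ne', Finset.sum_ite, Finset.compl_eq_univ_sdiff,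
        Finset.sdiff_eq_filter]
    simp only [PiLp.norm_eq_sum hp0, hsum]
    gcongr 1
    exact sum_compl_le_sum_compl_of_card_le (fun _ _ ↦ by positivity)
      (fun i hi k hk ↦ by gcongr; exact hS i hi k hk) hcard

end Greedy

section Biorthogonal

open WithLp

variable {ι κ : Type*} [Fintype κ] {p q : ℝ≥0∞}

/-- The quantity `|⟨f, φ k⟩| / ‖φ k‖_q` by which the greedy selection ranks the coefficients of `f`;
it is `0` when `φ k = 0`. -/
noncomputable def greedyWeight (q : ℝ≥0∞) (φ : ι → κ → ℝ) (f : κ → ℝ) (k : ι) : ℝ :=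
  |f ⬝ᵥ φ k| / ‖toLp q (φ k)‖

theorem norm_greedyWeight [Fact (1 ≤ q)] (φ : ι → κ → ℝ) (f : κ → ℝ) (k : ι) :
    ‖greedyWeight q φ f k‖ = greedyWeight q φ f k :=
  Real.norm_of_nonneg (by unfold greedyWeight; positivity)

theorem norm_toLp_dotProduct_smul_le_mul_greedyWeight [p.HolderConjugate q] {x : κ → ℝ}
    {φ : ι → κ → ℝ} {M : ℝ} {k : ι} (hφ : φ k ≠ 0) (hM : ‖toLp p x‖ * ‖toLp q (φ k)‖ ≤ M)
    (f : κ → ℝ) : ‖toLp p ((f ⬝ᵥ φ k) • x)‖ ≤ M * greedyWeight q φ f k := by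
  have : Fact (1 ≤ p) := ⟨ENNReal.HolderConjugate.one_le p q⟩
  have : Fact (1 ≤ q) := ⟨ENNReal.HolderConjugate.one_le q p⟩
  have hpos : 0 < ‖toLp q (φ k)‖ := norm_pos_iff.2 (by simpa using hφ)
  calc ‖toLp p ((f ⬝ᵥ φ k) • x)‖ = |f ⬝ᵥ φ k| * ‖toLp p x‖ := by
        rw [toLp_smul, norm_smul, Real.norm_eq_abs]
    _ ≤ |f ⬝ᵥ φ k| * (M / ‖toLp q (φ k)‖) := by
        gcongr
        exact (le_div_iff₀ hpos).2 hM
    _ = M * greedyWeight q φ f k := by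
        rw [greedyWeight, mul_div_left_comm]

variable [Fintype ι] [DecidableEq ι] [p.HolderConjugate q]

theorem sum_dotProduct_smul_eq_self {R : Type*} [CommRing R] {ψ φ : ι → ι → R}
    (hbi : ∀ i k, ψ i ⬝ᵥ φ k = if i = k then 1 else 0) (f : ι → R) :
    ∑ i, (f ⬝ᵥ φ i) • ψ i = f := by
  have hmul : Matrix.of ψ * (Matrix.of φ).transpose = 1 := by
    ext i k
    exact (hbi i k).trans Matrix.one_apply.symm
  calc ∑ i, (f ⬝ᵥ φ i) • ψ i
      = Matrix.vecMul (Matrix.vecMul f (Matrix.of φ).transpose) (Matrix.of ψ) := by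
        rw [Matrix.vecMul_eq_sum]; rfl
    _ = f := by rw [Matrix.vecMul_vecMul, mul_eq_one_comm.1 hmul, Matrix.vecMul_one]

theorem sub_sum_smul_dotProduct {R : Type*} [CommRing R] {ψ φ : ι → κ → R}
    (hbi : ∀ i k, ψ i ⬝ᵥ φ k = if i = k then 1 else 0) (f : κ → R) (z : ι → R) (k : ι) :
    (f - ∑ i, z i • ψ i) ⬝ᵥ φ k = f ⬝ᵥ φ k - z k := by
  simp [sub_dotProduct, sum_dotProduct, hbi]

theorem norm_toLp_indicator_compl_greedyWeight_le {ψ φ : ι → κ → ℝ} {L : ℕ}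
    (hbi : ∀ i k, ψ i ⬝ᵥ φ k = if i = k then 1 else 0)
    (hL : ∀ j, {i | φ i j ≠ 0}.ncard ≤ L) (f : κ → ℝ) (z : ι → ℝ) :
    ‖toLp p (z.supportᶜ.indicator (greedyWeight q φ f))‖ ≤
      (L : ℝ) ^ p.toReal⁻¹ * ‖toLp p (f - ∑ i, z i • ψ i)‖ := by
  have : Fact (1 ≤ p) := ⟨ENNReal.HolderConjugate.one_le p q⟩
  have : Fact (1 ≤ q) := ⟨ENNReal.HolderConjugate.one_le q p⟩
  set e := f - ∑ i, z i • ψ i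
  refine (norm_toLp_le_norm_toLp fun k ↦ ?_).trans
    (norm_toLp_norm_indicator_support_le_of_overlap_le hL e)
  by_cases hk : z k = 0
  · have hcoeff : f ⬝ᵥ φ k = e ⬝ᵥ φ k := by rw [sub_sum_smul_dotProduct hbi, hk, sub_zero]
    rw [Set.indicator_of_mem (by simpa using hk), norm_norm, norm_greedyWeight, greedyWeight,
      hcoeff]
    exact div_le_of_le_mul₀ (norm_nonneg _) (norm_nonneg _)
      (abs_dotProduct_le_norm_indicator_support_mul_norm e (φ k))
  · simp [hk]

theorem norm_toLp_sub_sum_smul_le_greedyWeight {ψ φ : ι → ι → ℝ} {K : ℕ} {M : ℝ}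
    (hbi : ∀ i k, ψ i ⬝ᵥ φ k = if i = k then 1 else 0)
    (hK : ∀ j, {i | ψ i j ≠ 0}.ncard ≤ K) (hM₀ : 0 ≤ M)
    (hM : ∀ k, ‖toLp p (ψ k)‖ * ‖toLp q (φ k)‖ ≤ M) (f : ι → ℝ) (S : Finset ι) :
    ‖toLp p (f - ∑ i ∈ S, (f ⬝ᵥ φ i) • ψ i)‖ ≤
      (K : ℝ) ^ q.toReal⁻¹ * (M * ‖toLp p ((S : Set ι)ᶜ.indicator (greedyWeight q φ f))‖) := by
  have : Fact (1 ≤ p) := ⟨ENNReal.HolderConjugate.one_le p q⟩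
  have : Fact (1 ≤ q) := ⟨ENNReal.HolderConjugate.one_le q p⟩
  set g : ι → ι → ℝ := (S : Set ι)ᶜ.indicator fun i ↦ (f ⬝ᵥ φ i) • ψ i
  have hres : f - ∑ i ∈ S, (f ⬝ᵥ φ i) • ψ i = ∑ i, g i := by
    nth_rw 1 [← sum_dotProduct_smul_eq_self hbi f]
    rw [sub_eq_iff_eq_add, ← Finset.sum_compl_add_sum S, add_left_inj,
      ← Finset.sum_indicator_subset _ (Finset.subset_univ Sᶜ), Finset.coe_compl]
  have hgK (j : ι) : {i | g i j ≠ 0}.ncard ≤ K := by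
    have hsub : {i | g i j ≠ 0} ⊆ {i | ψ i j ≠ 0} := fun i hi hψ ↦ hi <| by
      by_cases hiS : i ∈ S <;> simp [g, hiS, hψ]
    exact (Set.ncard_le_ncard hsub).trans (hK j)
  rw [hres]
  refine (norm_toLp_sum_le_of_overlap_le p q hgK).trans ?_
  gcongr
  refine norm_toLp_le_mul_norm_toLp hM₀ fun k ↦ ?_
  by_cases hk : k ∈ S
  · simp [g, hk]
  have hφ : φ k ≠ 0 := fun hφ ↦ by simpa [hφ] using hbi k k
  have hk' : k ∈ (S : Set ι)ᶜ := by simpa using hk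
  simpa only [g, Set.indicator_of_mem hk', norm_norm, norm_greedyWeight] using
    norm_toLp_dotProduct_smul_le_mul_greedyWeight hφ (hM k) f

theorem norm_toLp_sub_sum_smul_le_of_greedy {ψ φ : ι → ι → ℝ} {K L : ℕ} {M : ℝ}
    (hbi : ∀ i k, ψ i ⬝ᵥ φ k = if i = k then 1 else 0)
    (hK : ∀ j, {i | ψ i j ≠ 0}.ncard ≤ K) (hL : ∀ j, {i | φ i j ≠ 0}.ncard ≤ L) (hM₀ : 0 ≤ M)
    (hM : ∀ k, ‖toLp p (ψ k)‖ * ‖toLp q (φ k)‖ ≤ M) {f z : ι → ℝ} {S : Finset ι}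
    (hS : ∀ i ∈ S, ∀ k ∉ S, greedyWeight q φ f k ≤ greedyWeight q φ f i)
    (hz : z.support.ncard ≤ S.card) :
    ‖toLp p (f - ∑ i ∈ S, (f ⬝ᵥ φ i) • ψ i)‖ ≤
      M * ((K : ℝ) ^ q.toReal⁻¹ * (L : ℝ) ^ p.toReal⁻¹) * ‖toLp p (f - ∑ i, z i • ψ i)‖ := by
  have : Fact (1 ≤ p) := ⟨ENNReal.HolderConjugate.one_le p q⟩
  have : Fact (1 ≤ q) := ⟨ENNReal.HolderConjugate.one_le q p⟩
  have hgreedy : ‖toLp p ((S : Set ι)ᶜ.indicator (greedyWeight q φ f))‖ ≤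
      ‖toLp p (z.supportᶜ.indicator (greedyWeight q φ f))‖ := by
    classical
    rw [← z.support.coe_toFinset]
    refine norm_toLp_indicator_compl_le_of_card_le (by simpa only [norm_greedyWeight] using hS) ?_
    rwa [← Set.ncard_eq_toFinset_card']
  calc ‖toLp p (f - ∑ i ∈ S, (f ⬝ᵥ φ i) • ψ i)‖
      ≤ (K : ℝ) ^ q.toReal⁻¹ * (M * ‖toLp p ((S : Set ι)ᶜ.indicator (greedyWeight q φ f))‖) :=
        norm_toLp_sub_sum_smul_le_greedyWeight hbi hK hM₀ hM f S
    _ ≤ (K : ℝ) ^ q.toReal⁻¹ *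
          (M * ((L : ℝ) ^ p.toReal⁻¹ * ‖toLp p (f - ∑ i, z i • ψ i)‖)) := by
        gcongr
        exact hgreedy.trans (norm_toLp_indicator_compl_greedyWeight_le hbi hL f z)
    _ = M * ((K : ℝ) ^ q.toReal⁻¹ * (L : ℝ) ^ p.toReal⁻¹) * ‖toLp p (f - ∑ i, z i • ψ i)‖ := by
        ring

end Biorthogonal

theorem lpNorm_eq_norm_toLp {n : ℕ} {p : ℝ≥0∞} (hp : p ≠ 0) (x : Fin n → ℝ) :
    lpNorm p x = ‖WithLp.toLp p x‖ := by
  rcases eq_or_ne p ∞ with rfl | hp'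
  · simp [lpNorm, PiLp.norm_eq_ciSup]
  · simp [lpNorm, hp', PiLp.norm_eq_sum (ENNReal.toReal_pos hp hp')]

theorem rpow_inv_toReal_mul_rpow_inv_toReal (p q : ℝ≥0∞) [p.HolderConjugate q] {x : ℝ}
    (hx : 0 ≤ x) : x ^ q.toReal⁻¹ * x ^ p.toReal⁻¹ = x := by
  have hsum : q.toReal⁻¹ + p.toReal⁻¹ = 1 := by
    rw [← ENNReal.toReal_inv, ← ENNReal.toReal_inv, ← ENNReal.toReal_add, add_comm,
      ENNReal.HolderConjugate.inv_add_inv_eq_one p q, ENNReal.toReal_one]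
    · simpa using ENNReal.HolderConjugate.ne_zero q p
    · simpa using ENNReal.HolderConjugate.ne_zero p q
  rw [← Real.rpow_add_of_nonneg hx (by positivity) (by positivity), hsum, Real.rpow_one]

theorem stmt7_general {n B K L : ℕ} (ψ φ : Fin n → Fin n → ℝ)
    (hbi : ∀ i k, dotp (ψ i) (φ k) = if i = k then (1 : ℝ) else 0)
    (hK : ∀ j : Fin n, ({i | ψ i j ≠ 0} : Set (Fin n)).ncard ≤ K)
    (hL : ∀ j : Fin n, ({i | φ i j ≠ 0} : Set (Fin n)).ncard ≤ L)
    (p q : ℝ≥0∞) (hpq : 1 / p + 1 / q = 1)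
    (M : ℝ) (hM : ∀ k, lpNorm p (ψ k) * lpNorm q (φ k) ≤ M)
    (f : Fin n → ℝ) (S : Finset (Fin n)) (hcard : B ≤ S.card)
    (hS : ∀ i ∈ S, ∀ k ∉ S,
      |dotp f (φ k)| / lpNorm q (φ k) ≤ |dotp f (φ i)| / lpNorm q (φ i)) :
    lpNorm p (fun j => f j - ∑ i ∈ S, dotp f (φ i) * ψ i j) ≤
      -- For `p = ∞` the exponent `p.toReal⁻¹` is `0 = 1 / p`, and likewise for `q`.
      M * ((K : ℝ) ^ q.toReal⁻¹ * (L : ℝ) ^ p.toReal⁻¹) *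
        sInf {e : ℝ | ∃ z : Fin n → ℝ, Sparse B z ∧
          e = lpNorm p (fun j => f j - ∑ i, z i * ψ i j)} := by
  have : p.HolderConjugate q := ENNReal.holderConjugate_iff.2 (by simpa only [one_div] using hpq)
  have : Fact (1 ≤ p) := ⟨ENNReal.HolderConjugate.one_le p q⟩
  have : Fact (1 ≤ q) := ⟨ENNReal.HolderConjugate.one_le q p⟩
  have hlp := lpNorm_eq_norm_toLp (n := n) (ENNReal.HolderConjugate.ne_zero p q)
  have hlq := lpNorm_eq_norm_toLp (n := n) (ENNReal.HolderConjugate.ne_zero q p)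
  have hpi (T : Finset (Fin n)) (c : Fin n → ℝ) :
      (fun j ↦ f j - ∑ i ∈ T, c i * ψ i j) = f - ∑ i ∈ T, c i • ψ i := by
    ext j
    simp
  simp only [hlp, hlq, hpi] at hM hS ⊢
  rcases n.eq_zero_or_pos with rfl | hn
  · simp [norm_of_subsingleton, Sparse]
  have hM₀ : 0 ≤ M := le_trans (by positivity) (hM ⟨0, hn⟩)
  rw [← smul_eq_mul, ← Real.sInf_smul_of_nonneg (by positivity)]
  have hz₀ : Sparse B (0 : Fin n → ℝ) := by simp [Sparse]
  refine le_csInf (Set.Nonempty.smul_set ⟨_, 0, hz₀, rfl⟩) ?_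
  rintro _ ⟨_, ⟨z, hz, rfl⟩, rfl⟩
  exact norm_toLp_sub_sum_smul_le_of_greedy hbi hK hL hM₀ hM hS (hz.trans hcard)

/-- let `{ψ_i}` be an orthonormal basis of `ℝ^n` with overlap at most `K`,
`1 ≤ p < ∞` with Hölder conjugate `q`, and `‖ψ_k‖_p · ‖ψ_k‖_q ≤ M` for every `k`.
Let `f ∈ ℝ^n`, `B ≤ n`, and let `S` be a set of `B` indices of the `B` largest values
of `|⟨f, ψ_k⟩| / ‖ψ_k‖_q`.  Then `‖f − Σ_{i∈S} ⟨f, ψ_i⟩ ψ_i‖_p ≤ M · K · E`, where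
`E` is the minimum over `B`-sparse `z` of `‖f − Σ_i z_i ψ_i‖_p`. -/
theorem stmt7 {n B K : ℕ} (ψ : Fin n → Fin n → ℝ)
    (horth : ∀ i k, dotp (ψ i) (ψ k) = if i = k then (1 : ℝ) else 0)
    (hK : ∀ j : Fin n, ({i | ψ i j ≠ 0} : Set (Fin n)).ncard ≤ K)
    (p q : ℝ≥0∞) (hp1 : 1 ≤ p) (hptop : p ≠ ∞) (hpq : 1 / p + 1 / q = 1)
    (M : ℝ) (hM : ∀ k, lpNorm p (ψ k) * lpNorm q (ψ k) ≤ M)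
    (f : Fin n → ℝ) (hB : B ≤ n)
    (S : Finset (Fin n)) (hcard : S.card = B)
    (hS : ∀ i ∈ S, ∀ k ∉ S,
      |dotp f (ψ k)| / lpNorm q (ψ k) ≤ |dotp f (ψ i)| / lpNorm q (ψ i)) :
    lpNorm p (fun j => f j - ∑ i ∈ S, dotp f (ψ i) * ψ i j) ≤
      M * (K : ℝ) *
        sInf {e : ℝ | ∃ z : Fin n → ℝ, Sparse B z ∧
          e = lpNorm p (fun j => f j - ∑ i, z i * ψ i j)} := by
  have : p.HolderConjugate q := ENNReal.holderConjugate_iff.2 (by simpa only [one_div] using hpq)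
  simpa only [rpow_inv_toReal_mul_rpow_inv_toReal p q K.cast_nonneg] using
    stmt7_general ψ ψ horth hK hK p q hpq M hM f S hcard.ge hS
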